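/- arXiv:2002.04771 — 5 statements merged into one kernel-verified Lean document; each statement's English description precedes it below -/
import Mathlib

section
/- If G is algebraically finite and ac(∅) = ∅ (equivalently, every orbit of G on U is infinite), then there exist two copies C and D for G with C ∩ D = ∅. -/
/-- `f` is adherent to the subgroup `G` of permutations of `U`:
for every finite set `F` there is `g ∈ G` agreeing with `f` on `F`. -/
def IsAdherent {U : Type*} (G : Subgroup (Equiv.Perm U)) (f : U → U) : Prop :=
  ∀ F : Finset U, ∃ g ∈ G, ∀ x ∈ F, f x = g x

/-- `C` is a copy for the group `G`: the range of a function adherent to `G`. -/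
def IsCopy {U : Type*} (G : Subgroup (Equiv.Perm U)) (C : Set U) : Prop :=
  ∃ f : U → U, IsAdherent G f ∧ Set.range f = C

/-- The algebraic closure of `F`: the union of all finite orbits of the pointwise
stabilizer of `F`, i.e. the set of points whose orbit under that stabilizer is finite. -/
def algCl {U : Type*} (G : Subgroup (Equiv.Perm U)) (F : Set U) : Set U :=
  {x | Set.Finite {y | ∃ g ∈ G, (∀ a ∈ F, g a = a) ∧ g x = y}}

/-- `G` is algebraically finite: the algebraic closure of every finite set is finite. -/
def AlgebraicallyFinite {U : Type*} (G : Subgroup (Equiv.Perm U)) : Prop :=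
  ∀ F : Finset U, (algCl G ↑F).Finite

/-!
Two adherent functions `f`, `h` are built together out of finite approximations: pairs `g, g' ∈ G`
restricted to a finite algebraically closed set, whose images meet only inside `ac(∅)`. Off `ac(F)`
the orbits of the pointwise stabilizer of `F` are infinite, so B. H. Neumann's lemma on coset
coverings provides elements of that stabilizer moving any finite set disjoint from `ac(F)` off any
other finite set. A point lies in `ac(F)` iff its stabilizer has finite index relative to that of
`F`, so multiplicativity of the index makes `ac` idempotent and `ac(F ∪ {x})` is again a possible
domain. Hence every approximation extends to one defined at a prescribed point, and by the
Rasiowa–Sikorski lemma countably many extensions can be made coherently. The copies so obtained meet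
exactly in `ac(∅)`, which lies in every copy.
-/

open MulAction

theorem exists_forall_finset_eq_of_directed {ι α β : Type*} [Preorder ι] [IsDirectedOrder ι]
    [Nonempty ι] {D : ι → Set α} {φ : ι → α → β} (hD : Monotone D)
    (hφ : ∀ ⦃i j⦄, i ≤ j → Set.EqOn (φ j) (φ i) (D i)) (hcover : ∀ x, ∃ i, x ∈ D i) :
    ∃ f : α → β, ∀ F : Finset α, ∃ i, ∀ x ∈ F, x ∈ D i ∧ f x = φ i x := by
  classical
  choose i hi using hcover
  refine ⟨fun x ↦ φ (i x) x, fun F ↦ ?_⟩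
  obtain ⟨j, hj⟩ := (F.image i).exists_le
  have hle : ∀ x ∈ F, i x ≤ j := fun x hx ↦ hj _ (Finset.mem_image_of_mem i hx)
  exact ⟨j, fun x hx ↦ ⟨hD (hle x hx) (hi x), (hφ (hle x hx) (hi x)).symm⟩⟩

open scoped Pointwise in
theorem exists_smul_notMem_of_infinite_orbit {K U : Type*} [Group K] [MulAction K U]
    {A : Finset U} (hA : ∀ a ∈ A, (orbit K a).Infinite) (B : Finset U) :
    ∃ k : K, ∀ a ∈ A, k • a ∉ B := by
  classical
  by_contra! hmeet
  let S : Finset (U × U) := (A ×ˢ B).filter fun p ↦ p.2 ∈ orbit K p.1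
  have hS : ∀ p ∈ S, ∃ k : K, k • p.1 = p.2 := fun p hp ↦ (Finset.mem_filter.mp hp).2
  choose! t ht using hS
  have hcover : ⋃ p ∈ S, t p • (stabilizer K p.1 : Set K) = Set.univ := by
    refine Set.eq_univ_of_forall fun k ↦ ?_
    obtain ⟨a, ha, hka⟩ := hmeet k
    have hp : (a, k • a) ∈ S :=
      Finset.mem_filter.mpr ⟨Finset.mk_mem_product ha hka, mem_orbit a k⟩
    refine Set.mem_biUnion hp ?_
    rw [mem_leftCoset_iff, SetLike.mem_coe, mem_stabilizer_iff, mul_smul, inv_smul_eq_iff, ht _ hp]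
  obtain ⟨p, hp, hindex⟩ := Subgroup.exists_finiteIndex_of_leftCoset_cover hcover
  refine hA p.1 (Finset.mem_product.mp (Finset.mem_filter.mp hp).1).1 ?_
  exact Set.finite_of_ncard_ne_zero (index_stabilizer K p.1 ▸ hindex.index_ne_zero)

section PermutationGroup

variable {U : Type*} {G : Subgroup (Equiv.Perm U)} {A F : Set U} {x : U}

theorem mem_algCl_iff_finite_orbit : x ∈ algCl G F ↔ (orbit (fixingSubgroup G F) x).Finite := by
  have horbit : orbit (fixingSubgroup G F) x = {y | ∃ g ∈ G, (∀ a ∈ F, g a = a) ∧ g x = y} := by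
    ext y
    constructor
    · rintro ⟨⟨⟨g, hg⟩, hgF⟩, rfl⟩
      exact ⟨g, hg, (mem_fixingSubgroup_iff G).mp hgF, rfl⟩
    · rintro ⟨g, hg, hgF, rfl⟩
      exact ⟨⟨⟨g, hg⟩, (mem_fixingSubgroup_iff G).mpr hgF⟩, rfl⟩
  rw [horbit]
  rfl

theorem mem_algCl_iff_relIndex_ne_zero :
    x ∈ algCl G F ↔ (stabilizer G x).relIndex (fixingSubgroup G F) ≠ 0 := by
  have hindex : (stabilizer G x).relIndex (fixingSubgroup G F) =
      (orbit (fixingSubgroup G F) x).ncard := index_stabilizer (fixingSubgroup G F) x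
  rw [hindex, mem_algCl_iff_finite_orbit]
  exact ⟨fun hfin ↦ Set.ncard_ne_zero_of_mem (mem_orbit_self x) hfin, Set.finite_of_ncard_ne_zero⟩

theorem subset_algCl : F ⊆ algCl G F := fun x hx ↦
  (Set.finite_singleton x).subset fun _ ⟨_, _, hgF, hgx⟩ ↦ hgx ▸ hgF x hx

theorem algCl_subset_algCl_of_subset (hA : A.Finite) (hAF : A ⊆ algCl G F) :
    algCl G A ⊆ algCl G F := by
  intro x hx
  have := hA.to_subtype
  have hfix : fixingSubgroup G A = ⨅ a : A, stabilizer G (a : U) := by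
    ext g
    simp only [mem_fixingSubgroup_iff, Subgroup.mem_iInf, mem_stabilizer_iff, Subtype.forall]
  have hAindex : (fixingSubgroup G A).relIndex (fixingSubgroup G F) ≠ 0 := by
    rw [hfix]
    exact Subgroup.relIndex_iInf_ne_zero fun a ↦ mem_algCl_iff_relIndex_ne_zero.mp (hAF a.2)
  rw [mem_algCl_iff_relIndex_ne_zero] at hx ⊢
  exact Subgroup.relIndex_ne_zero_trans hx hAindex

theorem exists_smul_eq_and_smul_notMem (g : G) (F : Set U) {A : Finset U}
    (hA : ∀ x ∈ A, x ∉ algCl G F) (B : Finset U) :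
    ∃ g' : G, (∀ x ∈ F, g' • x = g • x) ∧ ∀ x ∈ A, g' • x ∉ B := by
  classical
  obtain ⟨k, hk⟩ := exists_smul_notMem_of_infinite_orbit (K := fixingSubgroup G F)
    (fun x hx ↦ mt mem_algCl_iff_finite_orbit.mpr (hA x hx)) (B.image (g⁻¹ • ·))
  refine ⟨g * k, fun x hx ↦ ?_, fun x hx hB ↦ hk x hx (Finset.mem_image.mpr ⟨_, hB, ?_⟩)⟩
  · rw [mul_smul, (mem_fixingSubgroup_iff G).mp k.2 x hx]
  · rw [mul_smul, inv_smul_smul, Subgroup.smul_def k x]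

theorem IsCopy.algCl_empty_subset {C : Set U} (hC : IsCopy G C) : algCl G ∅ ⊆ C := by
  obtain ⟨f, hf, rfl⟩ := hC
  intro x (hx : Set.Finite _)
  obtain ⟨g, hg, hfg⟩ := hf hx.toFinset
  have hmem : g⁻¹ x ∈ hx.toFinset :=
    hx.mem_toFinset.mpr ⟨g⁻¹, G.inv_mem hg, fun _ ha ↦ ha.elim, rfl⟩
  exact ⟨g⁻¹ x, (hfg _ hmem).trans (g.apply_symm_apply x)⟩

/-- A finite approximation to a pair of adherent functions whose ranges meet only in `ac(∅)`: two
elements of `G`, of which only the restrictions to the finite algebraically closed set `domain`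
matter. -/
structure ApproxPair (G : Subgroup (Equiv.Perm U)) where
  domain : Finset U
  left : G
  right : G
  algCl_domain_subset : algCl G domain ⊆ domain
  left_smul_mem_of_eq : ∀ x ∈ domain, ∀ y ∈ domain, left • x = right • y → left • x ∈ algCl G ∅

namespace ApproxPair

instance : Preorder (ApproxPair G) where
  le P Q := P.domain ⊆ Q.domain ∧
    ∀ x ∈ P.domain, Q.left • x = P.left • x ∧ Q.right • x = P.right • x
  le_refl P := ⟨subset_rfl, fun _ _ ↦ ⟨rfl, rfl⟩⟩
  le_trans P Q R hPQ hQR := ⟨hPQ.1.trans hQR.1, fun x hx ↦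
    ⟨(hQR.2 x (hPQ.1 hx)).1.trans (hPQ.2 x hx).1, (hQR.2 x (hPQ.1 hx)).2.trans (hPQ.2 x hx).2⟩⟩

theorem nonempty_of_finite_algCl_empty (hfin : (algCl G ∅).Finite) : Nonempty (ApproxPair G) :=
  ⟨{ domain := hfin.toFinset
     left := 1
     right := 1
     algCl_domain_subset := by
       rw [hfin.coe_toFinset]
       exact algCl_subset_algCl_of_subset hfin subset_rfl
     left_smul_mem_of_eq := fun x hx _ _ _ ↦ by rwa [one_smul, ← hfin.mem_toFinset] }⟩

theorem exists_le_mem_domain (hG : AlgebraicallyFinite G) (P : ApproxPair G) (x : U) :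
    ∃ Q, P ≤ Q ∧ x ∈ Q.domain := by
  classical
  have hfin := hG (insert x P.domain)
  let E : Finset U := hfin.toFinset
  have hE : insert x P.domain ⊆ E := fun y hy ↦ hfin.mem_toFinset.mpr (subset_algCl hy)
  have hnew : ∀ y ∈ E \ P.domain, y ∉ algCl G (P.domain : Set U) := fun y hy hcl ↦
    (Finset.mem_sdiff.mp hy).2 (P.algCl_domain_subset hcl)
  obtain ⟨g, hgP, hgE⟩ :=
    exists_smul_eq_and_smul_notMem P.left P.domain hnew (P.domain.image (P.right • ·))
  obtain ⟨h, hhP, hhE⟩ :=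
    exists_smul_eq_and_smul_notMem P.right P.domain hnew (E.image (g • ·))
  have hmeet : ∀ a ∈ E, ∀ b ∈ E, g • a = h • b → g • a ∈ algCl G ∅ := by
    intro a ha b hb hab
    have hbP : b ∈ P.domain := by
      by_contra hbP
      exact hhE b (Finset.mem_sdiff.mpr ⟨hb, hbP⟩) (hab ▸ Finset.mem_image_of_mem _ ha)
    rw [hhP b hbP] at hab
    have haP : a ∈ P.domain := by
      by_contra haP
      exact hgE a (Finset.mem_sdiff.mpr ⟨ha, haP⟩) (hab ▸ Finset.mem_image_of_mem _ hbP)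
    rw [hgP a haP] at hab ⊢
    exact P.left_smul_mem_of_eq a haP b hbP hab
  have hclosed : algCl G E ⊆ E := by
    rw [hfin.coe_toFinset]
    exact algCl_subset_algCl_of_subset hfin subset_rfl
  exact ⟨⟨E, g, h, hclosed, hmeet⟩,
    ⟨(Finset.subset_insert _ _).trans hE, fun y hy ↦ ⟨hgP y hy, hhP y hy⟩⟩,
    hE (Finset.mem_insert_self _ _)⟩

theorem exists_forall_finset_eq_smul [Countable U] (hG : AlgebraicallyFinite G) :
    ∃ f h : U → U, ∀ F : Finset U, ∃ P : ApproxPair G,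
      ∀ x ∈ F, x ∈ P.domain ∧ f x = P.left • x ∧ h x = P.right • x := by
  have := Encodable.ofCountable U
  obtain ⟨P₀⟩ := nonempty_of_finite_algCl_empty (G := G) (by simpa using hG ∅)
  let definedAt (x : U) : Order.Cofinal (ApproxPair G) :=
    ⟨{P | x ∈ P.domain}, fun P ↦ (exists_le_mem_domain hG P x).imp fun _ h ↦ h.symm⟩
  let I : Order.Ideal (ApproxPair G) := Order.idealOfCofinals P₀ definedAt
  have : IsDirectedOrder I := ⟨directedOn_iff_directed.mp I.directed⟩
  have : Nonempty I := I.nonempty.to_subtype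
  have hcover (x : U) : ∃ P : I, x ∈ P.1.domain :=
    let ⟨P, hxP, hPI⟩ := Order.cofinal_meets_idealOfCofinals P₀ definedAt x
    ⟨⟨P, hPI⟩, hxP⟩
  obtain ⟨f, hf⟩ := exists_forall_finset_eq_of_directed
    (D := fun P : I ↦ (P.1.domain : Set U)) (φ := fun P x ↦ (P.1.left • x, P.1.right • x))
    (fun P Q (hPQ : P.1 ≤ Q.1) ↦ Finset.coe_subset.mpr hPQ.1)
    (fun P Q (hPQ : P.1 ≤ Q.1) x hx ↦ Prod.ext (hPQ.2 x hx).1 (hPQ.2 x hx).2) hcover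
  refine ⟨fun x ↦ (f x).1, fun x ↦ (f x).2, fun F ↦ ?_⟩
  obtain ⟨P, hP⟩ := hf F
  exact ⟨P, fun x hx ↦ ⟨(hP x hx).1, Prod.ext_iff.mp (hP x hx).2⟩⟩

end ApproxPair

end PermutationGroup

theorem exists_disjoint_copies_general {U : Type*} [Countable U]
    (G : Subgroup (Equiv.Perm U)) (hG : AlgebraicallyFinite G) :
    ∃ C D : Set U, IsCopy G C ∧ IsCopy G D ∧ C ∩ D = algCl G ∅ := by
  classical
  obtain ⟨f, h, hfh⟩ := ApproxPair.exists_forall_finset_eq_smul hG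
  have hf : IsCopy G (Set.range f) := ⟨f, fun F ↦
    let ⟨P, hP⟩ := hfh F
    ⟨P.left, P.left.2, fun x hx ↦ (hP x hx).2.1⟩, rfl⟩
  have hh : IsCopy G (Set.range h) := ⟨h, fun F ↦
    let ⟨P, hP⟩ := hfh F
    ⟨P.right, P.right.2, fun x hx ↦ (hP x hx).2.2⟩, rfl⟩
  refine ⟨_, _, hf, hh, Set.Subset.antisymm ?_ <|
    Set.subset_inter hf.algCl_empty_subset hh.algCl_empty_subset⟩
  rintro _ ⟨⟨x, rfl⟩, y, hyx⟩
  obtain ⟨P, hP⟩ := hfh {x, y}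
  obtain ⟨hx, hfx, -⟩ := hP x (by simp)
  obtain ⟨hy, -, hhy⟩ := hP y (by simp)
  rw [hfx]
  exact P.left_smul_mem_of_eq x hx y hy (by rw [← hfx, ← hhy, hyx])

/-- Theorem: if `G` is algebraically finite and the algebraic closure of the empty set
is empty (every orbit of `G` is infinite), then there are two disjoint copies for `G`. -/
theorem exists_disjoint_copies {U : Type*} [Countable U] [Infinite U]
    (G : Subgroup (Equiv.Perm U)) (hG : AlgebraicallyFinite G)
    (h0 : algCl G (∅ : Set U) = ∅) :
    ∃ C D : Set U, IsCopy G C ∧ IsCopy G D ∧ C ∩ D = ∅ := by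
  simpa only [h0] using exists_disjoint_copies_general G hG
end

section
/- Assume that U itself is not the only copy for G. Then for every finite subset F of U and every copy C with F ⊆ C there exists a strictly decreasing ω-sequence C = C₀ ⊋ C₁ ⊋ C₂ ⊋ ⋯ of copies Cᵢ for G such that ⋂_{i∈ω} Cᵢ = ic(F), the intersection of all copies containing F. -/
/-!
Let `C = f[U]` with `f` adherent to `G`. On a finite set, `f` agrees with some `g ∈ G`, so for any
copy `D` the copy `f[g⁻¹[D]] ⊆ C` has the same elements as `C ∩ D` in a prescribed finite set.
Hence a copy containing a finite set `S` can be shrunk, keeping `S`, so as to avoid any given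
point outside `ic(S)`. Likewise, moving a proper copy by an element of `G` gives a proper copy
containing a given finite set, and its image under `f` is a proper part of `C`; so the shrinking
can be made strict. Discarding the points of `C \ ic(S)` one at a time gives the chain.
-/

/-- The intersection of all copies for `G` containing `S`, written `ic(S)` in the paper; it is the
limit of the decreasing chains of copies. -/
def interCopies {U : Type*} (G : Subgroup (Equiv.Perm U)) (S : Set U) : Set U :=
  ⋂₀ {D : Set U | IsCopy G D ∧ S ⊆ D}

theorem exists_ssubset_chain_iInter_eq {α : Type*} {P : Set α → Prop} {A C : Set α}
    (hC : P C) (hA : ∀ D, P D → A ⊆ D) (hne : (C \ A).Nonempty) (hcount : (C \ A).Countable)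
    (hstep : ∀ D, P D → ∀ x ∈ C \ A, ∃ D', P D' ∧ D' ⊂ D ∧ x ∉ D') :
    ∃ Cs : ℕ → Set α, Cs 0 = C ∧ (∀ i, P (Cs i)) ∧ (∀ i, Cs (i + 1) ⊂ Cs i) ∧
      (⋂ i, Cs i) = A := by
  obtain ⟨x, hx⟩ := hcount.exists_eq_range hne
  have hx_mem (n : ℕ) : x n ∈ C \ A := hx ▸ Set.mem_range_self n
  choose next hnext hlt hnotMem using
    fun (n : ℕ) (D : {D // P D}) ↦ hstep D.1 D.2 (x n) (hx_mem n)
  let Cs : ℕ → {D // P D} := fun n ↦ Nat.rec ⟨C, hC⟩ (fun n D ↦ ⟨next n D, hnext n D⟩) n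
  refine ⟨fun n ↦ (Cs n).1, rfl, fun n ↦ (Cs n).2, fun n ↦ hlt n (Cs n), ?_⟩
  refine Set.Subset.antisymm (fun y hy ↦ ?_) (Set.subset_iInter fun n ↦ hA _ (Cs n).2)
  rw [Set.mem_iInter] at hy
  by_contra hyA
  obtain ⟨n, rfl⟩ : y ∈ Set.range x := hx ▸ ⟨hy 0, hyA⟩
  exact hnotMem n (Cs n) (hy (n + 1))

section Copies

variable {U : Type*} {G : Subgroup (Equiv.Perm U)} {f h : U → U} {C D S : Set U}

namespace IsAdherent

theorem of_mem {g : Equiv.Perm U} (hg : g ∈ G) : IsAdherent G g :=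
  fun _ ↦ ⟨g, hg, fun _ _ ↦ rfl⟩

theorem exists_eqOn (hf : IsAdherent G f) (hS : S.Finite) : ∃ g ∈ G, Set.EqOn f g S := by
  obtain ⟨g, hg, hfg⟩ := hf hS.toFinset
  exact ⟨g, hg, fun x hx ↦ hfg x (hS.mem_toFinset.2 hx)⟩

theorem injective (hf : IsAdherent G f) : Function.Injective f := by
  intro x y hxy
  obtain ⟨g, -, hfg⟩ := hf.exists_eqOn (Set.toFinite {x, y})
  refine g.injective ?_
  rw [← hfg (by simp), ← hfg (by simp), hxy]

theorem comp (hf : IsAdherent G f) (hh : IsAdherent G h) : IsAdherent G (f ∘ h) := by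
  intro F
  obtain ⟨k, hk, hhk⟩ := hh F
  obtain ⟨g, hg, hfg⟩ := hf.exists_eqOn (F.finite_toSet.image h)
  refine ⟨g * k, G.mul_mem hg hk, fun x hx ↦ ?_⟩
  rw [Function.comp_apply, hfg (Set.mem_image_of_mem h hx), hhk x hx, Equiv.Perm.mul_apply]

end IsAdherent

namespace IsCopy

theorem image (hD : IsCopy G D) (hf : IsAdherent G f) : IsCopy G (f '' D) := by
  obtain ⟨h, hh, rfl⟩ := hD
  exact ⟨f ∘ h, hf.comp hh, Set.range_comp f h⟩

theorem preimage (hD : IsCopy G D) {g : Equiv.Perm U} (hg : g ∈ G) : IsCopy G (g ⁻¹' D) := by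
  rw [← g.image_symm_eq_preimage]
  exact hD.image (.of_mem (G.inv_mem hg))

theorem exists_subset_inter_eq (hC : IsCopy G C) (hD : IsCopy G D) {T : Set U} (hT : T.Finite) :
    ∃ C', IsCopy G C' ∧ C' ⊆ C ∧ T ∩ C' = T ∩ (C ∩ D) := by
  obtain ⟨f, hf, rfl⟩ := hC
  obtain ⟨g, hg, hfg⟩ := hf.exists_eqOn (hT.preimage hf.injective.injOn)
  refine ⟨f '' (g ⁻¹' D), (hD.preimage hg).image hf, Set.image_subset_range _ _, ?_⟩
  have mem_image_iff {y : U} (hy : f y ∈ T) : f y ∈ f '' (g ⁻¹' D) ↔ f y ∈ D := by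
    rw [hf.injective.mem_set_image, Set.mem_preimage, ← hfg hy]
  ext x
  constructor
  · rintro ⟨hxT, y, hy, rfl⟩
    exact ⟨hxT, ⟨y, rfl⟩, (mem_image_iff hxT).1 ⟨y, hy, rfl⟩⟩
  · rintro ⟨hxT, ⟨y, rfl⟩, hxD⟩
    exact ⟨hxT, (mem_image_iff hxT).2 hxD⟩

theorem exists_ne_univ_superset (hD : IsCopy G D) (hD_ne : D ≠ Set.univ) (hS : S.Finite) :
    ∃ E, IsCopy G E ∧ E ≠ Set.univ ∧ S ⊆ E := by
  obtain ⟨h, hh, h_range⟩ := hD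
  obtain ⟨g, hg, hhg⟩ := hh.exists_eqOn hS
  refine ⟨g ⁻¹' D, preimage ⟨h, hh, h_range⟩ hg, ?_, fun x hx ↦ h_range ▸ ⟨x, hhg hx⟩⟩
  rwa [Ne, Set.preimage_eq_univ_iff, g.range_eq_univ, Set.univ_subset_iff]

theorem exists_ssubset (hne : ∃ D, IsCopy G D ∧ D ≠ Set.univ) (hC : IsCopy G C)
    (hS : S.Finite) (hSC : S ⊆ C) : ∃ C', IsCopy G C' ∧ S ⊆ C' ∧ C' ⊂ C := by
  obtain ⟨D, hD, hD_ne⟩ := hne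
  obtain ⟨f, hf, rfl⟩ := hC
  obtain ⟨E, hE, hE_ne, hSE⟩ :=
    hD.exists_ne_univ_superset hD_ne (hS.preimage hf.injective.injOn)
  refine ⟨f '' E, hE.image hf, ?_, ?_⟩
  · rw [← Set.image_preimage_eq_of_subset hSC]
    exact Set.image_mono hSE
  · rw [← Set.image_univ]
    exact hf.injective.image_strictMono (Set.ssubset_univ_iff.2 hE_ne)

theorem interCopies_subset (hC : IsCopy G C) (hSC : S ⊆ C) : interCopies G S ⊆ C :=
  Set.sInter_subset_of_mem ⟨hC, hSC⟩

theorem nonempty_diff_interCopies (hne : ∃ D, IsCopy G D ∧ D ≠ Set.univ) (hC : IsCopy G C)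
    (hS : S.Finite) (hSC : S ⊆ C) : (C \ interCopies G S).Nonempty := by
  obtain ⟨C', hC', hSC', hC'C⟩ := hC.exists_ssubset hne hS hSC
  exact (Set.nonempty_of_ssubset hC'C).mono
    (Set.sdiff_subset_sdiff_right (hC'.interCopies_subset hSC'))

theorem exists_ssubset_notMem (hne : ∃ D, IsCopy G D ∧ D ≠ Set.univ) (hC : IsCopy G C)
    (hS : S.Finite) (hSC : S ⊆ C) {x : U} (hx : x ∉ interCopies G S) :
    ∃ C', (IsCopy G C' ∧ S ⊆ C') ∧ C' ⊂ C ∧ x ∉ C' := by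
  obtain ⟨C₁, hC₁, hSC₁, hC₁C⟩ := hC.exists_ssubset hne hS hSC
  obtain ⟨D, ⟨hD, hSD⟩, hxD⟩ : ∃ D, (IsCopy G D ∧ S ⊆ D) ∧ x ∉ D := by
    simpa [interCopies, and_assoc] using hx
  obtain ⟨C', hC', hC'C₁, hinter⟩ := hC₁.exists_subset_inter_eq hD (hS.insert x)
  have mem_iff {y : U} (hy : y ∈ insert x S) : y ∈ C' ↔ y ∈ C₁ ∩ D := by
    simpa [hy] using Set.ext_iff.1 hinter y
  refine ⟨C', ⟨hC', fun y hy ↦ ?_⟩, hC'C₁.trans_ssubset hC₁C, fun hxC' ↦ ?_⟩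
  · exact (mem_iff (.inr hy)).2 ⟨hSC₁ hy, hSD hy⟩
  · exact hxD ((mem_iff (.inl rfl)).1 hxC').2

end IsCopy

end Copies

theorem exists_decreasing_chain_of_copies_general {U : Type*} (G : Subgroup (Equiv.Perm U))
    (hne : ∃ C : Set U, IsCopy G C ∧ C ≠ Set.univ) {S C : Set U} (hS : S.Finite)
    (hC : IsCopy G C) (hSC : S ⊆ C) (hcount : (C \ interCopies G S).Countable) :
    ∃ Cs : ℕ → Set U, Cs 0 = C ∧ (∀ i, IsCopy G (Cs i)) ∧
      (∀ i, Cs (i + 1) ⊂ Cs i) ∧ (⋂ i, Cs i) = interCopies G S := by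
  obtain ⟨Cs, h_zero, h_copy, h_lt, h_inter⟩ :=
    exists_ssubset_chain_iInter_eq (P := fun D ↦ IsCopy G D ∧ S ⊆ D) ⟨hC, hSC⟩
      (fun _ hD ↦ hD.1.interCopies_subset hD.2) (hC.nonempty_diff_interCopies hne hS hSC) hcount
      (fun _ hD _ hx ↦ hD.1.exists_ssubset_notMem hne hS hD.2 hx.2)
  exact ⟨Cs, h_zero, fun i ↦ (h_copy i).1, h_lt, h_inter⟩

/-- Theorem: if `U` is not the only copy for `G`, then for every finite `F` and every
copy `C ⊇ F` there is a strictly decreasing sequence of copies starting at `C` whose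
intersection is the intersection of all copies containing `F`. -/
theorem exists_decreasing_chain_of_copies {U : Type*} [Countable U] [Infinite U]
    (G : Subgroup (Equiv.Perm U)) (hne : ∃ C : Set U, IsCopy G C ∧ C ≠ Set.univ)
    (F : Finset U) (C : Set U) (hC : IsCopy G C) (hFC : ↑F ⊆ C) :
    ∃ Cs : ℕ → Set U, Cs 0 = C ∧ (∀ i, IsCopy G (Cs i)) ∧
      (∀ i, Cs (i + 1) ⊂ Cs i) ∧
      (⋂ i, Cs i) = ⋂₀ {D : Set U | IsCopy G D ∧ ↑F ⊆ D} :=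
  exists_decreasing_chain_of_copies_general G hne F.finite_toSet hC hFC (Set.to_countable _)
end

section
/- The set of copies for G is closed under unions of nonempty up-directed families: if (Cᵢ)_{i∈I} is a nonempty family of copies which is directed under inclusion (any two members are contained in a common member of the family), then ⋃_{i∈I} Cᵢ is a copy for G. -/
/-!
Over a countable `U`, copies have a local characterization: `C` is a copy if and only if every
restriction of a member of `G` to a finite set that takes values in `C` extends to any further
point, by a member of `G`, with value in `C`. This condition speaks of one finite subset of `C`
at a time, and a finite subset of a directed union already lies in a member of the family.

That the condition suffices is a back-and-forth argument: an adherent function with range `C` is the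
union of a directed set of such finite restrictions that meets countably many cofinal sets.
-/

open Set

/-- The one-point extension property which characterizes the copies for `G` when `U` is countable:
a finite restriction of a member of `G` with values in `C` can be extended to one more point. -/
def HasExtensionProperty {U : Type*} (G : Subgroup (Equiv.Perm U)) (C : Set U) : Prop :=
  ∀ g ∈ G, ∀ F : Finset U, MapsTo g F C → ∀ x, ∃ h ∈ G, EqOn h g F ∧ h x ∈ C

/-- A finite partial map that is the restriction of a member of `G` and takes values in `C`: a
finite approximation to an adherent function with range `C`. The map is represented by its domain
and some member of `G` inducing it, whose values off the domain are irrelevant. -/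
structure PartialCopy {U : Type*} (G : Subgroup (Equiv.Perm U)) (C : Set U) where
  perm : Equiv.Perm U
  dom : Finset U
  perm_mem : perm ∈ G
  mapsTo : MapsTo perm dom C

section

variable {U : Type*} {G : Subgroup (Equiv.Perm U)} {C : Set U}

theorem IsAdherent.comp_perm {f : U → U} (hf : IsAdherent G f) {g : Equiv.Perm U} (hg : g ∈ G) :
    IsAdherent G (f ∘ g) := by
  intro F
  obtain ⟨k, hk, hkf⟩ := hf (F.map g.toEmbedding)
  exact ⟨k * g, G.mul_mem hk hg, fun x hx ↦ hkf (g x) (Finset.mem_map_of_mem _ hx)⟩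

theorem IsCopy.exists_isAdherent_eqOn (hC : IsCopy G C) {g : Equiv.Perm U} (hg : g ∈ G)
    {F : Finset U} (hF : MapsTo g F C) :
    ∃ f, IsAdherent G f ∧ range f = C ∧ EqOn f g F := by
  classical
  obtain ⟨f, hf, rfl⟩ := hC
  obtain ⟨E, hE⟩ : ∃ E : Finset U, E.image f = F.image g := by
    obtain ⟨E, -, hE⟩ := Finset.subset_set_image_iff.1
      (show (F.image g : Set U) ⊆ f '' univ by simpa using hF.image_subset)
    exact ⟨E, hE⟩
  obtain ⟨k, hk, hkf⟩ := hf E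
  refine ⟨f ∘ (k⁻¹ * g), hf.comp_perm (G.mul_mem (G.inv_mem hk) hg),
    (k⁻¹ * g).surjective.range_comp f, fun x hx ↦ ?_⟩
  obtain ⟨y, hy, hyx⟩ := Finset.mem_image.1 (hE ▸ Finset.mem_image_of_mem g hx)
  have hky : (k⁻¹ * g) x = y := by
    rw [Equiv.Perm.mul_apply, Equiv.Perm.inv_eq_iff_eq, ← hyx, hkf y hy]
  rw [Function.comp_apply, hky, hyx]

theorem IsCopy.hasExtensionProperty (hC : IsCopy G C) : HasExtensionProperty G C := by
  classical
  intro g hg F hF x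
  obtain ⟨f, hf, rfl, hfg⟩ := hC.exists_isAdherent_eqOn hg hF
  obtain ⟨h, hh, hfh⟩ := hf (insert x F)
  exact ⟨h, hh, fun y hy ↦ (hfh y (Finset.mem_insert_of_mem hy)).symm.trans (hfg hy),
    x, hfh x (Finset.mem_insert_self x F)⟩

theorem HasExtensionProperty.iUnion {ι : Type*} [Nonempty ι] {C : ι → Set U}
    (hC : ∀ i, HasExtensionProperty G (C i)) (hdir : Directed (· ⊆ ·) C) :
    HasExtensionProperty G (⋃ i, C i) := by
  intro g hg F hF x
  have hdir_preimage : Directed (· ⊆ ·) fun i ↦ g ⁻¹' C i :=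
    hdir.mono_comp (g := preimage g) _ fun _ _ h ↦ preimage_mono h
  obtain ⟨i, hi⟩ : ∃ i, MapsTo g F (C i) :=
    hdir_preimage.exists_mem_subset_of_finset_subset_biUnion (preimage_iUnion ▸ hF)
  obtain ⟨h, hh, hhg, hx⟩ := hC i g hg F hi x
  exact ⟨h, hh, hhg, mem_iUnion_of_mem i hx⟩

namespace PartialCopy

instance : Preorder (PartialCopy G C) where
  le p q := p.dom ⊆ q.dom ∧ EqOn q.perm p.perm p.dom
  le_refl p := ⟨Subset.rfl, eqOn_refl _ _⟩
  le_trans _ _ _ hpq hqr := ⟨hpq.1.trans hqr.1, (hqr.2.mono hpq.1).trans hpq.2⟩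

instance : Inhabited (PartialCopy G C) :=
  ⟨1, ∅, G.one_mem, by simp [MapsTo]⟩

theorem exists_eqOn_of_directedOn {I : Set (PartialCopy G C)} (hI : DirectedOn (· ≤ ·) I)
    (hdom : ∀ x, ∃ p ∈ I, x ∈ p.dom) :
    ∃ f : U → U, ∀ p ∈ I, EqOn f p.perm p.dom := by
  choose q hqI hq using hdom
  refine ⟨fun x ↦ (q x).perm x, fun p hp x hx ↦ ?_⟩
  obtain ⟨r, -, hqr, hpr⟩ := hI (q x) (hqI x) p hp
  exact (hqr.2 (hq x)).symm.trans (hpr.2 hx)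

theorem isCopy_of_directedOn {I : Set (PartialCopy G C)} (hne : I.Nonempty)
    (hI : DirectedOn (· ≤ ·) I) (hdom : ∀ x, ∃ p ∈ I, x ∈ p.dom)
    (hrange : ∀ c ∈ C, ∃ p ∈ I, c ∈ p.perm '' p.dom) : IsCopy G C := by
  obtain ⟨f, hf⟩ := exists_eqOn_of_directedOn hI hdom
  refine ⟨f, fun F ↦ ?_, Subset.antisymm ?_ fun c hc ↦ ?_⟩
  · obtain ⟨p, hp, hFp⟩ : ∃ p ∈ I, (F : Set U) ⊆ p.dom :=
      DirectedOn.exists_mem_subset_of_finset_subset_biUnion hne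
        (hI.mono fun _ _ h ↦ h.1) fun x _ ↦ by simpa using hdom x
    exact ⟨p.perm, p.perm_mem, fun x hx ↦ hf p hp (hFp hx)⟩
  · rintro _ ⟨x, rfl⟩
    obtain ⟨p, hp, hx⟩ := hdom x
    exact hf p hp hx ▸ p.mapsTo hx
  · obtain ⟨p, hp, x, hx, rfl⟩ := hrange c hc
    exact ⟨x, hf p hp hx⟩

theorem exists_ge_of_eqOn (p : PartialCopy G C) {h : Equiv.Perm U} (hh : h ∈ G)
    (hhp : EqOn h p.perm p.dom) {x : U} (hx : h x ∈ C) : ∃ q, p ≤ q ∧ q.perm = h ∧ x ∈ q.dom := by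
  classical
  have hmaps : MapsTo h (insert x p.dom : Finset U) C := by
    rw [Finset.coe_insert]
    exact insert_subset hx (p.mapsTo.congr hhp.symm)
  exact ⟨⟨h, insert x p.dom, hh, hmaps⟩, ⟨Finset.subset_insert x _, hhp⟩, rfl,
    Finset.mem_insert_self x _⟩

theorem isCofinal_setOf_mem_dom (hC : HasExtensionProperty G C) (x : U) :
    IsCofinal {p : PartialCopy G C | x ∈ p.dom} := by
  intro p
  obtain ⟨h, hh, hhp, hx⟩ := hC p.perm p.perm_mem p.dom p.mapsTo x
  obtain ⟨q, hpq, -, hxq⟩ := p.exists_ge_of_eqOn hh hhp hx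
  exact ⟨q, hxq, hpq⟩

-- A member of `G` is onto, so it already attains `c`: only the domain has to grow.
theorem isCofinal_setOf_mem_image {c : U} (hc : c ∈ C) :
    IsCofinal {p : PartialCopy G C | c ∈ p.perm '' p.dom} := by
  intro p
  obtain ⟨x, rfl⟩ := p.perm.surjective c
  obtain ⟨q, hpq, hqp, hxq⟩ := p.exists_ge_of_eqOn p.perm_mem (eqOn_refl _ _) hc
  exact ⟨q, ⟨x, hxq, congrArg (· x) hqp⟩, hpq⟩

end PartialCopy

theorem HasExtensionProperty.isCopy [Countable U] (hC : HasExtensionProperty G C) :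
    IsCopy G C := by
  have := Encodable.ofCountable (U ⊕ C)
  let 𝒟 : U ⊕ C → Order.Cofinal (PartialCopy G C) := Sum.elim
    (fun x ↦ ⟨_, PartialCopy.isCofinal_setOf_mem_dom hC x⟩)
    (fun c ↦ ⟨_, PartialCopy.isCofinal_setOf_mem_image c.2⟩)
  let I := Order.idealOfCofinals default 𝒟
  have generic (i : U ⊕ C) : ∃ p ∈ I, p ∈ 𝒟 i := by
    simpa only [and_comm] using Order.cofinal_meets_idealOfCofinals default 𝒟 i
  exact PartialCopy.isCopy_of_directedOn I.nonempty I.directed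
    (fun x ↦ generic (.inl x)) (fun c hc ↦ generic (.inr ⟨c, hc⟩))

theorem isCopy_iff_hasExtensionProperty [Countable U] :
    IsCopy G C ↔ HasExtensionProperty G C :=
  ⟨IsCopy.hasExtensionProperty, HasExtensionProperty.isCopy⟩

end

/-- Theorem: the union of a nonempty, inclusion-directed family of copies for `G`
is a copy for `G`. -/
theorem isCopy_iUnion_of_directed {U : Type*} [Countable U] [Infinite U]
    (G : Subgroup (Equiv.Perm U)) {ι : Type*} [Nonempty ι] (C : ι → Set U)
    (hcopy : ∀ i, IsCopy G (C i))
    (hdir : ∀ i j, ∃ k, C i ⊆ C k ∧ C j ⊆ C k) :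
    IsCopy G (⋃ i, C i) := by
  simp only [isCopy_iff_hasExtensionProperty] at hcopy ⊢
  exact HasExtensionProperty.iUnion hcopy hdir
end

section
/- If F is a finite subset of a copy C for G, then there exists a function f adherent to G with f[U] = C and f(a) = a for all a ∈ F. -/
section

variable {U : Type*} {G : Subgroup (Equiv.Perm U)} {f f' : U → U}

theorem isAdherent_of_mem {g : Equiv.Perm U} (hg : g ∈ G) : IsAdherent G g :=
  fun _ => ⟨g, hg, fun _ _ => rfl⟩

theorem IsAdherent.comp_s12 (hf : IsAdherent G f) (hf' : IsAdherent G f') :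
    IsAdherent G (f ∘ f') := by
  classical
  intro E
  obtain ⟨g', hg', f'_eq_g'⟩ := hf' E
  obtain ⟨g, hg, f_eq_g⟩ := hf (E.image f')
  refine ⟨g * g', G.mul_mem hg hg', fun x hx => ?_⟩
  calc
    f (f' x) = g (f' x) := f_eq_g _ (Finset.mem_image_of_mem f' hx)
    _ = g (g' x) := congrArg g (f'_eq_g' x hx)

-- If `g ∈ G` agrees with `f` on a finite set `E` with `f '' E = F`, then `g⁻¹` maps each point
-- of `F` back to a preimage of it under `f`.
theorem IsAdherent.exists_mem_apply_apply_eq_self (hf : IsAdherent G f) {F : Finset U}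
    (hF : ↑F ⊆ Set.range f) : ∃ g ∈ G, ∀ a ∈ F, f (g a) = a := by
  classical
  obtain ⟨E, rfl⟩ : ∃ E : Finset U, E.image f = F := by
    simpa only [← Set.image_univ, Finset.subset_set_image_iff, Set.subset_univ, true_and] using hF
  obtain ⟨g, hg, f_eq_g⟩ := hf E
  refine ⟨g⁻¹, G.inv_mem hg, Finset.forall_mem_image.2 fun x hx => ?_⟩
  rw [f_eq_g x hx, Equiv.Perm.inv_def, g.symm_apply_apply, f_eq_g x hx]

end

theorem exists_adherent_range_fixing_general {U : Type*}
    (G : Subgroup (Equiv.Perm U)) (C : Set U) (hC : IsCopy G C)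
    (F : Finset U) (hF : ↑F ⊆ C) :
    ∃ f : U → U, IsAdherent G f ∧ Set.range f = C ∧ ∀ a ∈ F, f a = a := by
  obtain ⟨f, hf, rfl⟩ := hC
  obtain ⟨g, hg, fg_eq_self⟩ := hf.exists_mem_apply_apply_eq_self hF
  exact ⟨f ∘ g, hf.comp_s12 (isAdherent_of_mem hg), g.surjective.range_comp f, fg_eq_self⟩

/-- Theorem: if `F` is a finite subset of a copy `C` for `G`, then there is a function
`f` adherent to `G` with range `C` fixing `F` pointwise. -/
theorem exists_adherent_range_fixing {U : Type*} [Countable U] [Infinite U]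
    (G : Subgroup (Equiv.Perm U)) (C : Set U) (hC : IsCopy G C)
    (F : Finset U) (hF : ↑F ⊆ C) :
    ∃ f : U → U, IsAdherent G f ∧ Set.range f = C ∧ ∀ a ∈ F, f a = a :=
  exists_adherent_range_fixing_general G C hC F hF
end

section
/- Let 𝓘 be the family of all sets that are intersections of nonempty families of copies for G, ordered by inclusion. Then an element C ∈ 𝓘 is completely meet-irreducible in 𝓘 (i.e. there exists C⁺ ∈ 𝓘 with C⁺ ⊋ C such that every Y ∈ 𝓘 with Y ⊋ C satisfies Y ⊇ C⁺) if and only if C is itself a copy for G and there exists x ∈ U \ C such that C is maximal with respect to inclusion among the copies for G not containing x. -/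
/-- The family of all intersections of nonempty families of copies for `G`. -/
def InterCopies {U : Type*} (G : Subgroup (Equiv.Perm U)) : Set (Set U) :=
  {S | ∃ 𝒞 : Set (Set U), 𝒞.Nonempty ∧ (∀ D ∈ 𝒞, IsCopy G D) ∧ S = ⋂₀ 𝒞}

section Lattice

variable {α : Type*} [CompleteLattice α] {P : Set α} {c u : α}

/-- The elements of a complete lattice generated by `P` under arbitrary nonempty meets. For the
copies of `G`, ordered by inclusion, this is `InterCopies G`. -/
def nonemptyInfs (P : Set α) : Set α :=
  {a | ∃ S : Set α, S.Nonempty ∧ S ⊆ P ∧ a = sInf S}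

lemma subset_nonemptyInfs (P : Set α) : P ⊆ nonemptyInfs P := fun a ha ↦
  ⟨{a}, Set.singleton_nonempty a, Set.singleton_subset_iff.2 ha, sInf_singleton.symm⟩

lemma lowerBounds_nonemptyInfs_inter_Ioi (P : Set α) (c : α) :
    lowerBounds (nonemptyInfs P ∩ Set.Ioi c) = lowerBounds (P ∩ Set.Ioi c) := by
  apply Set.Subset.antisymm
  · exact lowerBounds_mono_set (Set.inter_subset_inter_left _ (subset_nonemptyInfs P))
  · rintro u hu _ ⟨⟨S, -, hSP, rfl⟩, hc⟩
    exact le_sInf fun D hD ↦ hu ⟨hSP hD, lt_of_lt_of_le hc (sInf_le hD)⟩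

lemma exists_isLeast_nonemptyInfs_inter_Ioi_iff (htop : ⊤ ∈ P) :
    (∃ u, IsLeast (nonemptyInfs P ∩ Set.Ioi c) u) ↔
      ∃ u, c < u ∧ u ∈ lowerBounds (P ∩ Set.Ioi c) := by
  simp only [IsLeast, lowerBounds_nonemptyInfs_inter_Ioi]
  constructor
  · rintro ⟨u, ⟨-, hcu⟩, hu⟩
    exact ⟨u, hcu, hu⟩
  · rintro ⟨u, hcu, hu⟩
    have hne : (P ∩ Set.Ioi c).Nonempty := ⟨⊤, htop, hcu.trans_le le_top⟩
    exact ⟨sInf (P ∩ Set.Ioi c),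
      ⟨⟨_, hne, Set.inter_subset_left, rfl⟩, hcu.trans_le (le_sInf hu)⟩, fun _ ↦ sInf_le⟩

lemma mem_of_mem_nonemptyInfs_of_mem_lowerBounds (hc : c ∈ nonemptyInfs P) (hcu : c < u)
    (hu : u ∈ lowerBounds (P ∩ Set.Ioi c)) : c ∈ P := by
  obtain ⟨S, -, hSP, hcS⟩ := hc
  by_contra hcP
  have hlt : ∀ D ∈ S, c < D := fun D hD ↦
    (hcS.trans_le (sInf_le hD)).lt_of_ne fun h ↦ hcP (h ▸ hSP hD)
  have huS : u ≤ sInf S := le_sInf fun D hD ↦ hu ⟨hSP hD, hlt D hD⟩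
  exact hcu.not_ge (huS.trans_eq hcS.symm)

end Lattice

section Sets

variable {U : Type*} {P : Set (Set U)} {C : Set U}

lemma exists_ssubset_mem_lowerBounds_iff_exists_notMem :
    (∃ V, C ⊂ V ∧ V ∈ lowerBounds (P ∩ Set.Ioi C)) ↔
      ∃ x ∉ C, ∀ D ∈ P, x ∉ D → C ⊆ D → D = C := by
  constructor
  · rintro ⟨V, hCV, hV⟩
    obtain ⟨x, hxV, hxC⟩ := Set.exists_of_ssubset hCV
    refine ⟨x, hxC, fun D hD hxD hCD ↦ ?_⟩
    by_contra hne
    exact hxD (hV ⟨hD, hCD.ssubset_of_ne (Ne.symm hne)⟩ hxV)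
  · rintro ⟨x, hxC, hmax⟩
    refine ⟨insert x C, Set.ssubset_insert hxC, fun D ⟨hD, hCD⟩ ↦ ?_⟩
    have hxD : x ∈ D := by
      by_contra hxD
      exact hCD.ne' (hmax D hD hxD hCD.subset)
    exact Set.insert_subset hxD hCD.subset

theorem completely_meet_irreducible_iff_general (huniv : Set.univ ∈ P)
    (hC : C ∈ nonemptyInfs P) :
    (∃ Cp ∈ nonemptyInfs P, C ⊂ Cp ∧ ∀ Y ∈ nonemptyInfs P, C ⊂ Y → Cp ⊆ Y) ↔
      (C ∈ P ∧ ∃ x ∉ C, ∀ D ∈ P, x ∉ D → C ⊆ D → D = C) := by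
  have isLeast_iff :
      (∃ Cp ∈ nonemptyInfs P, C ⊂ Cp ∧ ∀ Y ∈ nonemptyInfs P, C ⊂ Y → Cp ⊆ Y) ↔
        ∃ Cp, IsLeast (nonemptyInfs P ∩ Set.Ioi C) Cp := by
    simp [IsLeast, mem_lowerBounds, and_assoc]
  rw [isLeast_iff, exists_isLeast_nonemptyInfs_inter_Ioi_iff huniv,
    ← exists_ssubset_mem_lowerBounds_iff_exists_notMem, iff_and_self]
  rintro ⟨V, hCV, hV⟩
  exact mem_of_mem_nonemptyInfs_of_mem_lowerBounds hC hCV hV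

end Sets

lemma isAdherent_id {U : Type*} (G : Subgroup (Equiv.Perm U)) : IsAdherent G id :=
  fun _ ↦ ⟨1, G.one_mem, fun _ _ ↦ rfl⟩

lemma isCopy_univ {U : Type*} (G : Subgroup (Equiv.Perm U)) : IsCopy G Set.univ :=
  ⟨id, isAdherent_id G, Set.range_id⟩

/-- Theorem: an element `C` of the family of intersections of copies is completely
meet-irreducible in that family iff `C` is itself a copy and there is `x ∉ C` such that
`C` is maximal among copies not containing `x`. -/
theorem completely_meet_irreducible_iff {U : Type*} [Countable U] [Infinite U]
    (G : Subgroup (Equiv.Perm U)) (C : Set U) (hC : C ∈ InterCopies G) :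
    (∃ Cp ∈ InterCopies G, C ⊂ Cp ∧ ∀ Y ∈ InterCopies G, C ⊂ Y → Cp ⊆ Y) ↔
      (IsCopy G C ∧ ∃ x ∉ C,
        ∀ D : Set U, IsCopy G D → x ∉ D → C ⊆ D → D = C) :=
  completely_meet_irreducible_iff_general (P := {D | IsCopy G D}) (isCopy_univ G) hC
end
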